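/- Let k be a field of characteristic 0 and B a ℤ-graded normal affine k-domain. If B is saturated in codimension 1 (i.e. ē(B) = e(B)), then NR(B) = ∅ or NR(B) = { d ∈ ℕ : d ≥ 1 }; in other words, either B^{(d)} is rigid for every d ≥ 1, or B^{(d)} is non-rigid for every d ≥ 1. -/

import Mathlib

noncomputable section

/-- A derivation is locally nilpotent. -/
def IsLND {R : Type*} [CommRing R] (D : Derivation ℤ R R) : Prop :=
  ∀ b : R, ∃ n : ℕ, 0 < n ∧ (⇑D)^[n] b = 0

/-- Kernel of a derivation, as a subring. -/
def kerDer {R : Type*} [CommRing R] (D : Derivation ℤ R R) : Subring R where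
  carrier := {x | D x = 0}
  one_mem' := by simp
  mul_mem' := by
    intro a b ha hb
    simp only [Set.mem_setOf_eq] at *
    rw [Derivation.leibniz, ha, hb]
    simp
  add_mem' := by
    intro a b ha hb
    simp only [Set.mem_setOf_eq] at *
    rw [map_add, ha, hb, add_zero]
  zero_mem' := by simp
  neg_mem' := by
    intro a ha
    simp only [Set.mem_setOf_eq] at *
    rw [map_neg, ha, neg_zero]

section Graded

variable {G : Type*} [AddCommGroup G] {B : Type*} [CommRing B]

/-- The Veronese subring `B^{(H)} = ⊕_{i ∈ H} B_i` of a `G`-graded ring,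
realized as the subring generated by the homogeneous elements whose degree lies in `H`. -/
def verSub (𝒜 : G → AddSubgroup B) (H : AddSubgroup G) : Subring B :=
  Subring.closure (⋃ i ∈ (H : Set G), (𝒜 i : Set B))

/-- 𝔾(B): the subgroup of G generated by the degrees of nonzero homogeneous elements. -/
def Gsub (𝒜 : G → AddSubgroup B) : AddSubgroup G :=
  AddSubgroup.closure { i : G | 𝒜 i ≠ ⊥ }

/-- `H ∈ 𝕋(B)`: the quotient `𝔾(B)/(H ∩ 𝔾(B))` is torsion. -/
def Tmem (𝒜 : G → AddSubgroup B) (H : AddSubgroup G) : Prop :=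
  ∀ g ∈ Gsub 𝒜, ∃ n : ℕ, 0 < n ∧ n • g ∈ H

/-- A homogeneous derivation of `B`. -/
def IsHomogDer (𝒜 : G → AddSubgroup B) (D : Derivation ℤ B B) : Prop :=
  ∃ d : G, ∀ (i : G) (x : B), x ∈ 𝒜 i → D x ∈ 𝒜 (i + d)

/-- A homogeneous derivation of a graded subring `S` of `B`. -/
def IsHomogDerOn (𝒜 : G → AddSubgroup B) (S : Subring B) (D : Derivation ℤ S S) : Prop :=
  ∃ d : G, ∀ (i : G) (x : S), (x : B) ∈ 𝒜 i → ((D x : S) : B) ∈ 𝒜 (i + d)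

/-- 𝕄̄(B,p): the subgroup of G generated by the degrees i with B_i ⊄ p. -/
def Mbar (𝒜 : G → AddSubgroup B) (p : Ideal B) : AddSubgroup G :=
  AddSubgroup.closure { i : G | ¬ (𝒜 i : Set B) ⊆ (p : Set B) }

/-- A prime ideal of height 1. -/
def heightOne {R : Type*} [CommRing R] (p : Ideal R) : Prop :=
  p.IsPrime ∧ (∃ q : Ideal R, q.IsPrime ∧ q < p) ∧
    ∀ q r : Ideal R, q.IsPrime → r.IsPrime → q < r → r < p → False

open Classical in
/-- 𝔾̄(B). -/
def Gbar (𝒜 : G → AddSubgroup B) : AddSubgroup G :=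
  if ∃ p : Ideal B, heightOne p then ⨅ p : {p : Ideal B // heightOne p}, Mbar 𝒜 p.1
  else Gsub 𝒜

end Graded

/-- The nonnegative generator of a subgroup of ℤ (so that the gcd of a set of integers
is `groupGen` of the subgroup it generates, and the lcm of a set of integers is
`groupGen` of the intersection of the subgroups the elements generate). -/
noncomputable def groupGen (H : AddSubgroup ℤ) : ℕ :=
  (Submodule.IsPrincipal.generator (AddSubgroup.toIntSubmodule H : Ideal ℤ)).natAbs

section ZGraded

variable {B : Type*} [CommRing B]

/-- The set of height-1 homogeneous prime ideals of a ℤ-graded ring. -/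
def homogHt1 (𝒜 : ℤ → AddSubgroup B) : Set (Ideal B) :=
  { p | heightOne p ∧ p = Ideal.span { x : B | x ∈ p ∧ ∃ i : ℤ, x ∈ 𝒜 i } }

/-- The saturation index e(B) = gcd{ n : B_n ≠ 0 } of a ℤ-graded ring. -/
noncomputable def eB (𝒜 : ℤ → AddSubgroup B) : ℕ :=
  groupGen (Gsub 𝒜)

open Classical in
/-- The codimension-1 saturation index ē(B) = lcm{ e(B/p) : p ∈ Z } (Z the set of
height-1 homogeneous primes) if Z ≠ ∅, and ē(B) = e(B) if Z = ∅.  Here e(B/p) is the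
gcd of { n : (B/p)_n ≠ 0 } = { n : B_n ⊄ p }, so that e(B/p)ℤ = 𝕄̄(B,p) and the lcm
corresponds to the intersection of the subgroups 𝕄̄(B,p). -/
noncomputable def ebarB (𝒜 : ℤ → AddSubgroup B) : ℕ :=
  if (homogHt1 𝒜).Nonempty then groupGen (⨅ p : homogHt1 𝒜, Mbar 𝒜 p.1) else eB 𝒜

end ZGraded


section ZGraded2

variable {B : Type*} [CommRing B]

/-- The d-th Veronese subring B^{(d)} of a ℤ-graded ring. -/
def verZ (𝒜 : ℤ → AddSubgroup B) (d : ℕ) : Subring B :=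
  verSub 𝒜 (AddSubgroup.zmultiples (d : ℤ))

/-- NR(B): the set of d ≥ 1 such that B^{(d)} is non-rigid. -/
def NRset (𝒜 : ℤ → AddSubgroup B) : Set ℕ :=
  { d | 1 ≤ d ∧ ∃ D : Derivation ℤ (verZ 𝒜 d) (verZ 𝒜 d), IsLND D ∧ D ≠ 0 }

/-- M(B): the maximal elements of NR(B) for the order d₁ ≼ d₂ ⟺ d₂ ∣ d₁. -/
def MsetZ (𝒜 : ℤ → AddSubgroup B) : Set ℕ :=
  { d | d ∈ NRset 𝒜 ∧ ∀ e ∈ NRset 𝒜, e ∣ d → e = d }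

end ZGraded2

/-!
A locally nilpotent derivation `D` of `B^{(H)}` extends to `Frac B`, since `B` is integral over
`B^{(H)}`. Saturation in codimension one says that at each height-one prime `P` every homogeneous
element can be moved into `B^{(H)}` by a homogeneous multiplier outside `P`, so the extension maps
`B` to `Frac B` without poles along `P`; as `B` is normal it maps `B` to itself, and it is again
locally nilpotent. Its top homogeneous component is a nonzero homogeneous locally nilpotent
derivation `E` of `B`.

Conversely, let `s` be a homogeneous local slice of `E` and `P` a height-one prime over `s` avoiding
`E s`. Modulo `P` every element becomes a kernel element after multiplication by a nonzero integer
and a power of `E s`, so by saturation at `P` the degree of `E` is a difference of degrees of kernel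
elements. Hence for every `H` with `𝔾(B)/(H ∩ 𝔾(B))` torsion some homogeneous `f` in the kernel
makes the degree of `f • E` lie in `H`, and `f • E` restricts to a nonzero locally nilpotent
derivation of `B^{(H)}`.
-/

section LocallyNilpotent

variable {R : Type*} [CommRing R]

/-- The ring `R` is rigid: its only locally nilpotent derivation is zero. -/
def IsRigid (R : Type*) [CommRing R] : Prop :=
  ∀ D : Derivation ℤ R R, IsLND D → D = 0

/-- `deg_D x = m`, where `deg_D` is the degree function of a locally nilpotent derivation `D`. -/
def HasNilDegree (D : Derivation ℤ R R) (x : R) (m : ℕ) : Prop :=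
  (⇑D)^[m] x ≠ 0 ∧ (⇑D)^[m + 1] x = 0

variable {D : Derivation ℤ R R}

theorem iterate_derivation_mul (D : Derivation ℤ R R) (n : ℕ) (x y : R) :
    (⇑D)^[n] (x * y) = ∑ ij ∈ Finset.HasAntidiagonal.antidiagonal n,
      (n.choose ij.1 : R) * ((⇑D)^[ij.1] x * (⇑D)^[ij.2] y) := by
  induction n with
  | zero => simp
  | succ n ih =>
    rw [Function.iterate_succ_apply', ih, map_sum,
      Finset.sum_antidiagonal_choose_succ_mul (fun i j => (⇑D)^[i] x * (⇑D)^[j] y) n,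
      ← Finset.sum_add_distrib]
    refine Finset.sum_congr rfl fun ij hij => ?_
    rw [Nat.choose_symm_of_eq_add (Finset.HasAntidiagonal.mem_antidiagonal.1 hij).symm]
    simp only [Function.iterate_succ_apply', Derivation.leibniz, smul_eq_mul,
      Derivation.map_natCast]
    ring

theorem iterate_derivation_const_mul {a : R} (ha : D a = 0) (n : ℕ) (x : R) :
    (⇑D)^[n] (a * x) = a * (⇑D)^[n] x := by
  induction n with
  | zero => rfl
  | succ n ih => simp [Function.iterate_succ_apply', ih, Derivation.leibniz, ha]

theorem iterate_derivation_pow_self {s : R} (hs : D (D s) = 0) (n : ℕ) :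
    (⇑D)^[n] (s ^ n) = (n.factorial : R) * D s ^ n := by
  induction n with
  | zero => simp
  | succ n ih =>
    have hder : D (s ^ (n + 1)) = (((n + 1 : ℕ) : R) * D s) * s ^ n := by
      simp only [Derivation.leibniz_pow, nsmul_eq_mul, smul_eq_mul, Nat.add_sub_cancel]; ring
    rw [Function.iterate_succ_apply, hder,
      iterate_derivation_const_mul (by simp [Derivation.leibniz, hs]), ih, Nat.factorial_succ]
    push_cast
    ring

theorem iterate_derivation_eq_zero_of_le {x : R} {m n : ℕ} (h : (⇑D)^[m] x = 0) (hmn : m ≤ n) :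
    (⇑D)^[n] x = 0 := by
  obtain ⟨c, rfl⟩ := Nat.exists_eq_add_of_le' hmn
  rw [Function.iterate_add_apply, h, iterate_map_zero]

theorem isLND_of_forall_exists_iterate_eq_zero (h : ∀ x, ∃ n, (⇑D)^[n] x = 0) : IsLND D := fun x =>
  have ⟨n, hn⟩ := h x
  ⟨n + 1, n.succ_pos, iterate_derivation_eq_zero_of_le hn n.le_succ⟩

theorem IsLND.smul {f : R} (hD : IsLND D) (hf : D f = 0) : IsLND (f • D) := by
  have hiter (n : ℕ) (x : R) : (⇑(f • D))^[n] x = f ^ n * (⇑D)^[n] x := by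
    induction n with
    | zero => simp
    | succ n ih =>
      have hfn : D (f ^ n) = 0 := pow_mem (S := kerDer D) hf n
      simp only [Function.iterate_succ_apply', ih, Derivation.smul_apply, Derivation.leibniz,
        hfn, smul_eq_mul]
      ring
  intro x
  obtain ⟨n, hn, hx⟩ := hD x
  exact ⟨n, hn, by rw [hiter, hx, mul_zero]⟩

theorem HasNilDegree.unique {x : R} {m n : ℕ} (hm : HasNilDegree D x m)
    (hn : HasNilDegree D x n) : m = n := by
  by_contra hne
  rcases lt_or_gt_of_ne hne with hlt | hlt
  · exact hn.1 (iterate_derivation_eq_zero_of_le hm.2 hlt)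
  · exact hm.1 (iterate_derivation_eq_zero_of_le hn.2 hlt)

theorem HasNilDegree.apply {x : R} {m : ℕ} (hx : HasNilDegree D x (m + 1)) :
    HasNilDegree D (D x) m :=
  hx

theorem hasNilDegree_zero_iff {x : R} : HasNilDegree D x 0 ↔ x ≠ 0 ∧ D x = 0 :=
  Iff.rfl

theorem IsLND.exists_hasNilDegree (hD : IsLND D) {x : R} (hx : x ≠ 0) :
    ∃ m, HasNilDegree D x m := by
  classical
  have hnil : ∃ n, (⇑D)^[n] x = 0 := (hD x).imp fun _ h => h.2
  obtain ⟨m, hm⟩ : ∃ m, Nat.find hnil = m + 1 :=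
    Nat.exists_eq_succ_of_ne_zero fun h0 => hx (by simpa [h0] using Nat.find_spec hnil)
  exact ⟨m, Nat.find_min hnil (by omega), hm ▸ Nat.find_spec hnil⟩

theorem IsLND.exists_local_slice (hD : IsLND D) {x : R} (hx : D x ≠ 0) :
    ∃ m, D ((⇑D)^[m] x) ≠ 0 ∧ D (D ((⇑D)^[m] x)) = 0 := by
  obtain ⟨m, hm⟩ := hD.exists_hasNilDegree hx
  refine ⟨m, ?_⟩
  simpa only [HasNilDegree, ← Function.iterate_succ_apply, Function.iterate_succ_apply'] using hm

variable [IsDomain R] [CharZero R]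

theorem HasNilDegree.mul {x y : R} {m n : ℕ} (hx : HasNilDegree D x m)
    (hy : HasNilDegree D y n) : HasNilDegree D (x * y) (m + n) := by
  constructor
  · rw [iterate_derivation_mul, Finset.sum_eq_single (m, n)]
    · exact mul_ne_zero (Nat.cast_ne_zero.2 (Nat.choose_pos (Nat.le_add_right _ _)).ne')
        (mul_ne_zero hx.1 hy.1)
    · rintro ⟨i, j⟩ hij hne
      rw [Finset.HasAntidiagonal.mem_antidiagonal] at hij
      obtain hi | hj : m + 1 ≤ i ∨ n + 1 ≤ j := by
        by_contra!
        exact hne (Prod.ext (by omega) (by omega))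
      · simp [iterate_derivation_eq_zero_of_le hx.2 hi]
      · simp [iterate_derivation_eq_zero_of_le hy.2 hj]
    · simp
  · rw [iterate_derivation_mul]
    refine Finset.sum_eq_zero ?_
    rintro ⟨i, j⟩ hij
    rw [Finset.HasAntidiagonal.mem_antidiagonal] at hij
    obtain hi | hj : m + 1 ≤ i ∨ n + 1 ≤ j := by omega
    · simp [iterate_derivation_eq_zero_of_le hx.2 hi]
    · simp [iterate_derivation_eq_zero_of_le hy.2 hj]

theorem HasNilDegree.pow {x : R} {m : ℕ} (hx : HasNilDegree D x m) (n : ℕ) :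
    HasNilDegree D (x ^ n) (n * m) := by
  induction n with
  | zero => simp [hasNilDegree_zero_iff]
  | succ n ih =>
    rw [pow_succ, Nat.succ_mul]
    exact ih.mul hx

theorem IsLND.apply_eq_zero_of_mul (hD : IsLND D) {x y : R} (hxy : x * y ≠ 0)
    (h : D (x * y) = 0) : D x = 0 := by
  obtain ⟨m, hm⟩ := hD.exists_hasNilDegree (left_ne_zero_of_mul hxy)
  obtain ⟨n, hn⟩ := hD.exists_hasNilDegree (right_ne_zero_of_mul hxy)
  have hdeg : m + n = 0 := (hm.mul hn).unique (hasNilDegree_zero_iff.2 ⟨hxy, h⟩)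
  obtain rfl : m = 0 := by omega
  exact hm.2

theorem IsLND.apply_unit (hD : IsLND D) {x : R} (hx : IsUnit x) : D x = 0 := by
  obtain ⟨y, hy⟩ := hx.exists_right_inv
  exact hD.apply_eq_zero_of_mul (y := y) (by simp [hy]) (by simp [hy])

end LocallyNilpotent

section Extension

theorem exists_derivation_of_forall_mem_algebraMap_range {A C : Type*} [CommRing A] [CommRing C]
    [Algebra A C] [FaithfulSMul A C] (E : Derivation ℤ C C)
    (hE : ∀ a, E (algebraMap A C a) ∈ (algebraMap A C).range) :
    ∃ D : Derivation ℤ A A, ∀ a, E (algebraMap A C a) = algebraMap A C (D a) := by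
  choose g hg using hE
  have hinj := FaithfulSMul.algebraMap_injective A C
  refine ⟨Derivation.mk' (AddMonoidHom.mk' g fun a b => hinj ?_).toIntLinearMap
    fun a b => hinj ?_, fun a => (hg a).symm⟩
  · simp [hg]
  · simp [hg, Derivation.leibniz]

open TensorProduct in
theorem exists_derivation_extending_of_isAlgebraic (R K : Type*) [CommRing R] [IsDomain R]
    [Field K] [CharZero K] [Algebra R K] [FaithfulSMul R K] [Algebra.IsAlgebraic R K]
    (D : Derivation ℤ R R) :
    ∃ E : Derivation ℤ K K, ∀ r : R, E (algebraMap R K r) = algebraMap R K (D r) := by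
  let L := FractionRing R
  let _ : Algebra L K := FractionRing.liftAlgebra R K
  have : IsScalarTower R L K := FractionRing.isScalarTower_liftAlgebra R K
  have : Algebra.IsAlgebraic L K :=
    (IsFractionRing.comap_isAlgebraic_iff (A := R) (K := L) (C := K)).1 inferInstance
  have : CharZero L := RingHom.charZero (algebraMap L K)
  -- `K` is formally étale over `R`, so `Ω[K⁄ℤ]` is the base change of `Ω[R⁄ℤ]`.
  have : Algebra.FormallyEtale R L := Algebra.FormallyEtale.of_isLocalization (nonZeroDivisors R)
  have : Algebra.FormallyEtale L K := Algebra.FormallyEtale.of_isSeparable L K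
  have : Algebra.FormallyEtale R K := Algebra.FormallyEtale.comp R L K
  let D₀ : Derivation ℤ R K := (Algebra.linearMap R K).compDer D
  let F : K ⊗[R] (Ω[R⁄ℤ]) →ₗ[K] K := LinearMap.liftBaseChange K D₀.liftKaehlerDifferential
  let e := KaehlerDifferential.tensorKaehlerEquivOfFormallyEtale ℤ R K
  refine ⟨(F ∘ₗ e.symm.toLinearMap).compDer (KaehlerDifferential.D ℤ K), fun r => ?_⟩
  change F (e.symm (KaehlerDifferential.D ℤ K (algebraMap R K r))) = _
  simp [e, KaehlerDifferential.tensorKaehlerEquivOfFormallyEtale_symm_D_algebraMap, F, D₀]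

variable {R B : Type*} [CommRing R] [CommRing B] [Algebra R B] {D : Derivation ℤ R R}
  {D' : Derivation ℤ B B}

theorem IsLND.of_algebraMap [FaithfulSMul R B] (hD' : IsLND D')
    (hext : ∀ r, D' (algebraMap R B r) = algebraMap R B (D r)) : IsLND D := by
  intro r
  obtain ⟨n, hn, hr⟩ := hD' (algebraMap R B r)
  refine ⟨n, hn, FaithfulSMul.algebraMap_injective R B ?_⟩
  rw [Function.Semiconj.iterate_right (fun r => (hext r).symm) n r, hr, map_zero]

theorem derivation_pow_pow (D' : Derivation ℤ B B) (n : ℕ) (b : B) :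
    D' (b ^ n) ^ n = (n : B) ^ n * (b ^ n) ^ (n - 1) * D' b ^ n := by
  rw [Derivation.leibniz_pow, nsmul_eq_mul, smul_eq_mul]
  ring

/-- By induction on `deg_D r`: `(D' b) ^ n` again comes from `R`, with degree `deg_D r - n`. -/
theorem exists_iterate_eq_zero_of_pow_eq_algebraMap [IsDomain R] [CharZero R] [IsDomain B]
    [FaithfulSMul R B] (hD : IsLND D) (hext : ∀ r, D' (algebraMap R B r) = algebraMap R B (D r))
    (hdiv : ∀ (r : R) (b : B), r ≠ 0 → algebraMap R B r * b ∈ (algebraMap R B).range →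
      b ∈ (algebraMap R B).range)
    {n : ℕ} (hn : n ≠ 0) {b : B} {r : R} (hb : b ^ n = algebraMap R B r) :
    ∃ N, (⇑D')^[N] b = 0 := by
  have hinj := FaithfulSMul.algebraMap_injective R B
  obtain rfl | hr0 := eq_or_ne r 0
  · exact ⟨0, pow_eq_zero_iff hn |>.1 (by simpa using hb)⟩
  obtain ⟨m, hm⟩ := hD.exists_hasNilDegree hr0
  induction m using Nat.strong_induction_on generalizing b r with
  | _ m ih =>
    obtain hD'b | hD'b := eq_or_ne (D' b) 0
    · exact ⟨1, hD'b⟩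
    set s : R := (n : R) ^ n * r ^ (n - 1) with hs
    have hs0 : s ≠ 0 := by simp [hs, hn, hr0]
    have hpow : algebraMap R B s * D' b ^ n = algebraMap R B (D r ^ n) := by
      rw [map_pow, ← hext, ← hb, derivation_pow_pow]
      simp [hs, ← hb]
    obtain ⟨r', hr'⟩ := hdiv s _ hs0 ⟨_, hpow.symm⟩
    have hr'0 : r' ≠ 0 := by
      rintro rfl
      exact pow_ne_zero n hD'b (by simpa using hr'.symm)
    have hsr' : s * r' = D r ^ n := hinj (by rw [map_mul, hr', hpow])
    obtain ⟨m', hm'⟩ := hD.exists_hasNilDegree hr'0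
    have hdeg : HasNilDegree D (s * r') (n * 0 + (n - 1) * m + m') :=
      ((HasNilDegree.pow (hasNilDegree_zero_iff.2 ⟨by simpa, by simp⟩) n).mul (hm.pow _)).mul hm'
    rw [hsr'] at hdeg
    cases m with
    | zero =>
      have hDr : D r = 0 := hm.2
      simp [hDr, hn, hs0, hr'0] at hsr'
    | succ m =>
      have hdeg_eq := hdeg.unique (hm.apply.pow n)
      have hlt : m' < m + 1 := by
        obtain ⟨e, rfl⟩ := Nat.exists_eq_succ_of_ne_zero hn
        simp only [Nat.succ_sub_one, Nat.succ_eq_add_one] at hdeg_eq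
        nlinarith
      obtain ⟨N, hN⟩ := ih m' hlt hr'.symm hr'0 hm'
      exact ⟨N + 1, hN⟩

end Extension

section HeightOne

variable {B : Type*} [CommRing B]

theorem mem_one_of_ideal_stable [IsNoetherianRing B] [IsIntegrallyClosed B]
    {K : Type*} [Field K] [Algebra B K] [IsFractionRing B K] {y : K} {I : Ideal B} (hI : I ≠ ⊥)
    (h : ∀ c ∈ I, ∃ w ∈ I, algebraMap B K w = c • y) : y ∈ (1 : Submodule B K) := by
  rw [Submodule.mem_one, ← IsIntegrallyClosed.isIntegral_iff]
  refine isIntegral_of_smul_mem_submodule (Submodule.map (Algebra.linearMap B K) I) ?_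
    (Submodule.FG.map _ (IsNoetherian.noetherian I)) y ?_
  · have hinj : Function.Injective (Algebra.linearMap B K) := IsFractionRing.injective B K
    simpa using (Submodule.map_injective_of_injective hinj).ne hI
  · rintro _ ⟨c, hc, rfl⟩
    obtain ⟨w, hw, hwc⟩ := h c hc
    exact ⟨w, hw, by simp [hwc, Algebra.smul_def, mul_comm]⟩

variable [IsDomain B]

theorem heightOne.eq_of_le {p q : Ideal B} (hp : heightOne p) (hq : q.IsPrime) (hq0 : q ≠ ⊥)
    (hqp : q ≤ p) : q = p := by
  by_contra hne
  exact hp.2.2 ⊥ q Ideal.isPrime_bot hq (bot_lt_iff_ne_bot.2 hq0) (lt_of_le_of_ne hqp hne)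

theorem heightOne_of_mem_minimalPrimes_span_singleton [IsNoetherianRing B] {s : B} (hs : s ≠ 0)
    {p : Ideal B} (hp : p ∈ (Ideal.span {s}).minimalPrimes) : heightOne p := by
  have hprime : p.IsPrime := hp.1.1
  have hp0 : ⊥ < p := bot_lt_iff_ne_bot.2 <| by
    rintro rfl
    exact hs (by simpa using hp.1.2)
  refine ⟨hprime, ⟨⊥, Ideal.isPrime_bot, hp0⟩, fun q r hq hr hqr hrp => ?_⟩
  have hp1 := Ideal.height_le_one_of_isPrincipal_of_mem_minimalPrimes _ p hp
  have hr0 : r.height = 0 := Order.lt_one_iff.1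
    ((Ideal.height_strict_mono_of_isPrime_of_isPrime hrp).trans_le hp1)
  exact not_lt_zero (hr0 ▸ Ideal.height_strict_mono_of_isPrime_of_isPrime hqr)

variable [IsNoetherianRing B] [IsIntegrallyClosed B] {K : Type*} [Field K] [Algebra B K]
  [IsFractionRing B K]

/-- Write `p = {c | c y ∈ B}`. Since `y` is not integral over `B`, some `w = c y` with `c ∈ p` lies
outside `p`, and then `p` is minimal over `(c)`. -/
theorem heightOne_of_isAssociatedPrime_quotient_one {p : Ideal B}
    (hp : IsAssociatedPrime p (K ⧸ (1 : Submodule B K))) : heightOne p := by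
  have hinj := IsFractionRing.injective B K
  obtain ⟨hprime, z, hpy⟩ := isAssociatedPrime_iff.1 hp
  obtain ⟨y, rfl⟩ := Submodule.Quotient.mk_surjective _ z
  have hmem (c : B) : c ∈ p ↔ ∃ w, algebraMap B K w = c • y := by
    rw [hpy, Submodule.mem_colon_singleton, Submodule.mem_bot, ← Submodule.Quotient.mk_smul,
      Submodule.Quotient.mk_eq_zero, Submodule.mem_one]
  have hy : y ∉ (1 : Submodule B K) := fun hy => hprime.one_notMem <| (hmem 1).2 <| by
    simpa [Submodule.mem_one] using hy
  have hp0 : p ≠ ⊥ := by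
    obtain ⟨a, b, hb, rfl⟩ := IsFractionRing.div_surjective (A := B) y
    have hb0 : b ≠ 0 := nonZeroDivisors.ne_zero hb
    have hbp : b ∈ p := (hmem b).2 ⟨a, by rw [Algebra.smul_def, mul_div_cancel₀]; simpa using hb0⟩
    exact fun h => hb0 (by simpa [h] using hbp)
  obtain ⟨c, hc, w, hw, hwp⟩ : ∃ c ∈ p, ∃ w, algebraMap B K w = c • y ∧ w ∉ p := by
    by_contra! hcon
    refine hy (mem_one_of_ideal_stable hp0 fun c hc => ?_)
    obtain ⟨w, hw⟩ := (hmem c).1 hc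
    exact ⟨w, hcon c hc w hw, hw⟩
  have hc0 : c ≠ 0 := by
    rintro rfl
    refine hwp ?_
    have : w = 0 := hinj (by simpa using hw)
    simp [this]
  refine heightOne_of_mem_minimalPrimes_span_singleton hc0
    ⟨⟨hprime, by simpa using hc⟩, fun r hr hrp a ha => ?_⟩
  obtain ⟨v, hv⟩ := (hmem a).1 ha
  have hwa : w * a = v * c := hinj <| by
    simp only [map_mul, hw, hv, Algebra.smul_def]
    ring
  have hcr : c ∈ r := hr.2 (Ideal.mem_span_singleton_self c)
  exact (hr.1.mem_or_mem (hwa ▸ r.mul_mem_left v hcr)).resolve_left fun h => hwp (hrp h)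

theorem mem_algebraMap_range_of_forall_heightOne {x : K}
    (hx : ∀ P : Ideal B, heightOne P → ∃ c ∉ P, c • x ∈ (algebraMap B K).range) :
    x ∈ (algebraMap B K).range := by
  by_contra hxB
  have hx0 : (Submodule.Quotient.mk x : K ⧸ (1 : Submodule B K)) ≠ 0 := by
    rwa [ne_eq, Submodule.Quotient.mk_eq_zero, Submodule.mem_one]
  obtain ⟨P, hP, hle⟩ := exists_le_isAssociatedPrime_of_isNoetherianRing B _ hx0
  obtain ⟨c, hcP, hcx⟩ := hx P (heightOne_of_isAssociatedPrime_quotient_one hP)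
  refine hcP (hle ?_)
  rwa [Submodule.mem_colon_singleton, Submodule.mem_bot, ← Submodule.Quotient.mk_smul,
    Submodule.Quotient.mk_eq_zero, Submodule.mem_one]

end HeightOne

section Grading

variable {G : Type*} [AddCommGroup G] {B : Type*} [CommRing B] (𝒜 : G → AddSubgroup B)

/-- The group generated by the degrees of the homogeneous elements in `S`. It is `𝕄̄(B, p)` when `S`
is the complement of the prime `p`. -/
def degreeGroup (S : Submonoid B) : AddSubgroup G :=
  AddSubgroup.closure {i | ∃ x ∈ 𝒜 i, x ∈ S}

theorem exists_sub_of_mem_degreeGroup [SetLike.GradedMonoid 𝒜] {S : Submonoid B} {i : G}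
    (hi : i ∈ degreeGroup 𝒜 S) :
    ∃ j l, ∃ u ∈ 𝒜 j, ∃ v ∈ 𝒜 l, u ∈ S ∧ v ∈ S ∧ i = j - l := by
  have h1 : (1 : B) ∈ 𝒜 0 := SetLike.GradedOne.one_mem
  induction hi using AddSubgroup.closure_induction with
  | mem i hi =>
    obtain ⟨u, hu, huS⟩ := hi
    exact ⟨i, 0, u, hu, 1, h1, huS, S.one_mem, (sub_zero i).symm⟩
  | zero => exact ⟨0, 0, 1, h1, 1, h1, S.one_mem, S.one_mem, (sub_zero 0).symm⟩
  | add _ _ _ _ h h' =>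
    obtain ⟨j, l, u, hu, v, hv, huS, hvS, rfl⟩ := h
    obtain ⟨j', l', u', hu', v', hv', huS', hvS', rfl⟩ := h'
    exact ⟨j + j', l + l', u * u', SetLike.mul_mem_graded hu hu', v * v',
      SetLike.mul_mem_graded hv hv', S.mul_mem huS huS', S.mul_mem hvS hvS', by abel⟩
  | neg _ _ h =>
    obtain ⟨j, l, u, hu, v, hv, huS, hvS, rfl⟩ := h
    exact ⟨l, j, v, hv, u, hu, hvS, huS, neg_sub j l⟩

theorem Mbar_eq_degreeGroup (p : Ideal B) [p.IsPrime] : Mbar 𝒜 p = degreeGroup 𝒜 p.primeCompl := by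
  simp only [Mbar, degreeGroup, Set.not_subset]
  rfl

theorem Mbar_le_Gsub (p : Ideal B) : Mbar 𝒜 p ≤ Gsub 𝒜 := by
  refine AddSubgroup.closure_mono fun i hi h0 => hi ?_
  rw [h0]
  simp

variable {𝒜} in
theorem mem_Gsub_of_mem {i : G} {x : B} (hx : x ∈ 𝒜 i) (hx0 : x ≠ 0) : i ∈ Gsub 𝒜 :=
  AddSubgroup.subset_closure fun h => hx0 (by simpa [h] using hx)

theorem Gbar_eq_Gsub_iff : Gbar 𝒜 = Gsub 𝒜 ↔ ∀ p, heightOne p → Gsub 𝒜 ≤ Mbar 𝒜 p := by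
  rw [Gbar]
  split_ifs with h
  · obtain ⟨p, hp⟩ := h
    rw [le_antisymm_iff, and_iff_right ((iInf_le _ ⟨p, hp⟩).trans (Mbar_le_Gsub 𝒜 p)), le_iInf_iff,
      Subtype.forall]
  · exact iff_of_true rfl fun p hp => absurd ⟨p, hp⟩ h

variable {𝒜} in
theorem mem_verSub_of_mem {H : AddSubgroup G} {i : G} (hi : i ∈ H) {x : B} (hx : x ∈ 𝒜 i) :
    x ∈ verSub 𝒜 H :=
  Subring.subset_closure (Set.mem_biUnion hi hx)

variable {𝒜} in
theorem exists_pow_succ_mem_verSub [SetLike.GradedMonoid 𝒜] {H : AddSubgroup G} (hH : Tmem 𝒜 H)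
    {i : G} {x : B} (hx : x ∈ 𝒜 i) : ∃ n, x ^ (n + 1) ∈ verSub 𝒜 H := by
  obtain rfl | hx0 := eq_or_ne x 0
  · exact ⟨0, by simp⟩
  · obtain ⟨n, hn, hni⟩ := hH i (mem_Gsub_of_mem hx hx0)
    obtain ⟨m, rfl⟩ := Nat.exists_eq_add_one.2 hn
    exact ⟨m, mem_verSub_of_mem hni (SetLike.pow_mem_graded _ hx)⟩

theorem derivation_mem_closure {s : Set B} (D : Derivation ℤ B B)
    (hs : ∀ x ∈ s, D x ∈ Subring.closure s) {x : B} (hx : x ∈ Subring.closure s) :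
    D x ∈ Subring.closure s := by
  induction hx using Subring.closure_induction with
  | mem x hx => exact hs x hx
  | zero => simp
  | one => simp
  | add x y _ _ hx hy => simpa using add_mem hx hy
  | neg x _ hx => simpa using hx
  | mul x y hx hy hDx hDy =>
    simpa [Derivation.leibniz] using add_mem (mul_mem hx hDy) (mul_mem hy hDx)

variable [DecidableEq G] [GradedRing 𝒜]

/-- The additive map given by `φ i` on the homogeneous component of degree `i`. -/
def liftGraded {M : Type*} [AddCommMonoid M] (φ : ∀ i, 𝒜 i →+ M) : B →+ M :=
  (DirectSum.toAddMonoid φ).comp (DirectSum.decomposeAddEquiv 𝒜).toAddMonoidHom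

theorem liftGraded_of_mem {M : Type*} [AddCommMonoid M] (φ : ∀ i, 𝒜 i →+ M) {i : G} {x : B}
    (hx : x ∈ 𝒜 i) : liftGraded 𝒜 φ x = φ i ⟨x, hx⟩ := by
  change DirectSum.toAddMonoid φ (DirectSum.decompose 𝒜 x) = _
  rw [DirectSum.decompose_of_mem 𝒜 hx, DirectSum.toAddMonoid_of]

open Classical in
/-- The projection of `B` onto its Veronese subring `B^{(H)}`. -/
def veroneseProj (H : AddSubgroup G) : B →+ B :=
  liftGraded 𝒜 fun i => if i ∈ H then (𝒜 i).subtype else 0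

section Veronese

variable {𝒜} {H : AddSubgroup G} {i : G} {x : B}

theorem veroneseProj_of_mem (hi : i ∈ H) (hx : x ∈ 𝒜 i) : veroneseProj 𝒜 H x = x := by
  rw [veroneseProj, liftGraded_of_mem 𝒜 _ hx, if_pos hi]
  rfl

theorem veroneseProj_of_notMem (hi : i ∉ H) (hx : x ∈ 𝒜 i) : veroneseProj 𝒜 H x = 0 := by
  rw [veroneseProj, liftGraded_of_mem 𝒜 _ hx, if_neg hi]
  rfl

theorem veroneseProj_mem (x : B) : veroneseProj 𝒜 H x ∈ verSub 𝒜 H := by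
  induction x using DirectSum.Decomposition.inductionOn 𝒜 with
  | zero => simp
  | @homogeneous i x =>
    by_cases hi : i ∈ H
    · simpa [veroneseProj_of_mem hi x.2] using mem_verSub_of_mem hi x.2
    · simp [veroneseProj_of_notMem hi x.2]
  | add x y hx hy => simpa using add_mem hx hy

theorem veroneseProj_mul {r : B} (hr : r ∈ verSub 𝒜 H) (y : B) :
    veroneseProj 𝒜 H (r * y) = r * veroneseProj 𝒜 H y := by
  induction hr using Subring.closure_induction generalizing y with
  | mem r hr =>
    obtain ⟨i, hi, hri⟩ := Set.mem_iUnion₂.1 hr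
    induction y using DirectSum.Decomposition.inductionOn 𝒜 with
    | zero => simp
    | @homogeneous j y =>
      have hry := SetLike.mul_mem_graded hri y.2
      have hij : i + j ∈ H ↔ j ∈ H := H.add_mem_cancel_left hi
      by_cases hj : j ∈ H
      · rw [veroneseProj_of_mem hj y.2, veroneseProj_of_mem (hij.2 hj) hry]
      · rw [veroneseProj_of_notMem hj y.2, veroneseProj_of_notMem (hij.not.2 hj) hry, mul_zero]
    | add x y hx hy => rw [mul_add, map_add, map_add, hx, hy, mul_add]
  | zero => simp
  | one => simp
  | add _ _ _ _ hx hy => simp [add_mul, hx, hy]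
  | neg _ _ hx => simp [hx]
  | mul _ _ _ _ hx hy => simp [mul_assoc, hx, hy]

theorem mem_verSub_iff : x ∈ verSub 𝒜 H ↔ veroneseProj 𝒜 H x = x := by
  refine ⟨fun hx => ?_, fun hx => hx ▸ veroneseProj_mem x⟩
  simpa [veroneseProj_of_mem H.zero_mem SetLike.GradedOne.one_mem] using veroneseProj_mul hx 1

theorem mem_verSub_of_mul_mem [IsDomain B] {r : B} (hr : r ∈ verSub 𝒜 H) (hr0 : r ≠ 0)
    (hrx : r * x ∈ verSub 𝒜 H) : x ∈ verSub 𝒜 H := by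
  rw [mem_verSub_iff, veroneseProj_mul hr] at hrx
  exact mem_verSub_iff.2 (mul_left_cancel₀ hr0 hrx)

theorem isIntegral_verSub (hH : Tmem 𝒜 H) : Algebra.IsIntegral (verSub 𝒜 H) B := by
  refine ⟨fun x => ?_⟩
  induction x using DirectSum.Decomposition.inductionOn 𝒜 with
  | zero => exact isIntegral_zero
  | homogeneous x =>
    obtain ⟨n, hxn⟩ := exists_pow_succ_mem_verSub hH x.2
    exact .of_pow n.succ_pos (isIntegral_algebraMap (x := (⟨x ^ (n + 1), hxn⟩ : verSub 𝒜 H)))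
  | add _ _ hx hy => exact hx.add hy

end Veronese

theorem isLND_of_forall_homogeneous {D : Derivation ℤ B B}
    (h : ∀ i, ∀ x ∈ 𝒜 i, ∃ n, (⇑D)^[n] x = 0) : IsLND D := by
  refine isLND_of_forall_exists_iterate_eq_zero fun x => ?_
  induction x using DirectSum.Decomposition.inductionOn 𝒜 with
  | zero => exact ⟨0, rfl⟩
  | homogeneous x => exact h _ x x.2
  | add x y hx hy =>
    obtain ⟨m, hm⟩ := hx
    obtain ⟨n, hn⟩ := hy
    refine ⟨max m n, ?_⟩
    rw [iterate_map_add, iterate_derivation_eq_zero_of_le hm (le_max_left _ _),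
      iterate_derivation_eq_zero_of_le hn (le_max_right _ _), add_zero]

theorem exists_homogeneous_apply_ne_zero {D : Derivation ℤ B B} (hD : D ≠ 0) :
    ∃ i, ∃ x ∈ 𝒜 i, D x ≠ 0 := by
  by_contra! h
  refine hD (Derivation.ext fun x => ?_)
  induction x using DirectSum.Decomposition.inductionOn 𝒜 with
  | zero => simp
  | homogeneous x => exact h _ x x.2
  | add x y hx hy => simpa [hx] using hy

end Grading

section Extending

variable {G : Type*} [AddCommGroup G] {B : Type*} [CommRing B]
  {𝒜 : G → AddSubgroup B} {H : AddSubgroup G}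

theorem exists_mem_add_mem_of_mem_degreeGroup [SetLike.GradedMonoid 𝒜] (hH : Tmem 𝒜 H)
    {S : Submonoid B} (hS : 0 ∉ S) {i : G} (hi : i ∈ degreeGroup 𝒜 S) :
    ∃ j, ∃ w ∈ 𝒜 j, w ∈ S ∧ i + j ∈ H := by
  obtain ⟨j, l, u, hu, v, hv, huS, hvS, rfl⟩ := exists_sub_of_mem_degreeGroup 𝒜 hi
  obtain ⟨n, hn, hnj⟩ := hH j (mem_Gsub_of_mem hu (ne_of_mem_of_not_mem huS hS))
  obtain ⟨m, rfl⟩ := Nat.exists_eq_add_one.2 hn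
  refine ⟨l + m • j, v * u ^ m, SetLike.mul_mem_graded hv (SetLike.pow_mem_graded m hu),
    S.mul_mem hvS (S.pow_mem huS m), ?_⟩
  rwa [show j - l + (l + m • j) = (m + 1) • j by rw [succ_nsmul]; abel]

variable {K : Type*} [Field K] [Algebra B K]

theorem pow_smul_derivation_mem_range [Algebra ℚ B] (E : Derivation ℤ K K) {x : B} {n : ℕ}
    (h : E (algebraMap B K (x ^ (n + 1))) ∈ (algebraMap B K).range) :
    x ^ n • E (algebraMap B K x) ∈ (algebraMap B K).range := by
  obtain ⟨y, hy⟩ := h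
  refine ⟨algebraMap ℚ B ((n + 1 : ℕ) : ℚ)⁻¹ * y, ?_⟩
  have hinv : algebraMap B K (algebraMap ℚ B ((n + 1 : ℕ) : ℚ)⁻¹) * ((n + 1 : ℕ) : K) = 1 := by
    rw [← map_natCast ((algebraMap B K).comp (algebraMap ℚ B)), RingHom.comp_apply, ← map_mul,
      ← map_mul, inv_mul_cancel₀ (Nat.cast_ne_zero.2 n.succ_ne_zero), map_one, map_one]
  rw [map_mul, hy, map_pow, Derivation.leibniz_pow, Nat.add_sub_cancel, nsmul_eq_mul, ← mul_assoc,
    hinv, one_mul, smul_eq_mul, Algebra.smul_def, map_pow]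

variable [IsDomain B] [Algebra ℚ B] [IsNoetherianRing B] [IsIntegrallyClosed B] [IsFractionRing B K]

/-- Let `P` have height one. Choose `w ∉ P` homogeneous with `b * w ∈ B^{(H)}` and `N` with
`w ^ N • E w ∈ B`: then `w ^ (N + 1) • E b ∈ B`. -/
theorem derivation_mem_range_of_homogeneous [SetLike.GradedMonoid 𝒜] (hsat : Gbar 𝒜 = Gsub 𝒜)
    (hH : Tmem 𝒜 H) {E : Derivation ℤ K K}
    (hE : ∀ r ∈ verSub 𝒜 H, E (algebraMap B K r) ∈ (algebraMap B K).range)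
    {i : G} {b : B} (hb : b ∈ 𝒜 i) : E (algebraMap B K b) ∈ (algebraMap B K).range := by
  obtain rfl | hb0 := eq_or_ne b 0
  · simp
  refine mem_algebraMap_range_of_forall_heightOne fun P hP => ?_
  have : P.IsPrime := hP.1
  have hi := (Gbar_eq_Gsub_iff 𝒜).1 hsat P hP (mem_Gsub_of_mem hb hb0)
  rw [Mbar_eq_degreeGroup] at hi
  obtain ⟨j, w, hw, hwP, hij⟩ := exists_mem_add_mem_of_mem_degreeGroup hH (by simp) hi
  have hEbw := hE (b * w) (mem_verSub_of_mem hij (SetLike.mul_mem_graded hb hw))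
  obtain ⟨N, hEw⟩ : ∃ N, w ^ N • E (algebraMap B K w) ∈ (algebraMap B K).range := by
    obtain ⟨N, hwn⟩ := exists_pow_succ_mem_verSub hH hw
    exact ⟨N, pow_smul_derivation_mem_range E (hE _ hwn)⟩
  refine ⟨w ^ (N + 1), P.primeCompl.pow_mem hwP _, ?_⟩
  convert sub_mem (mul_mem ((algebraMap B K).mem_range_self (w ^ N)) hEbw)
    (mul_mem ((algebraMap B K).mem_range_self b) hEw) using 1
  simp only [map_mul, Derivation.leibniz, Algebra.smul_def (R := B), map_pow, smul_eq_mul]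
  ring

variable [DecidableEq G] [GradedRing 𝒜]

theorem exists_derivation_extending_verSub (hsat : Gbar 𝒜 = Gsub 𝒜) (hH : Tmem 𝒜 H)
    (D : Derivation ℤ (verSub 𝒜 H) (verSub 𝒜 H)) :
    ∃ D' : Derivation ℤ B B, ∀ r : verSub 𝒜 H, D' r = D r := by
  let K := FractionRing B
  have : CharZero B := algebraRat.charZero B
  have : CharZero K := charZero_of_injective_algebraMap (IsFractionRing.injective B K)
  have := isIntegral_verSub hH
  have : Algebra.IsAlgebraic B K := IsLocalization.isAlgebraic K (nonZeroDivisors B)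
  have : Algebra.IsAlgebraic (verSub 𝒜 H) K := Algebra.IsIntegral.trans_isAlgebraic _ B K
  have : FaithfulSMul (verSub 𝒜 H) K := (faithfulSMul_iff_algebraMap_injective _ _).2 <|
    (IsFractionRing.injective B K).comp Subtype.val_injective
  obtain ⟨E, hE⟩ := exists_derivation_extending_of_isAlgebraic (verSub 𝒜 H) K D
  have hEB (b : B) : E (algebraMap B K b) ∈ (algebraMap B K).range := by
    induction b using DirectSum.Decomposition.inductionOn 𝒜 with
    | zero => simp
    | homogeneous b =>
      exact derivation_mem_range_of_homogeneous hsat hH (fun r hr => ⟨_, (hE ⟨r, hr⟩).symm⟩) b.2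
    | add b c hb hc => simpa only [map_add] using add_mem hb hc
  obtain ⟨D', hD'⟩ := exists_derivation_of_forall_mem_algebraMap_range E hEB
  exact ⟨D', fun r => IsFractionRing.injective B K ((hD' r).symm.trans (hE r))⟩

end Extending

section ExtendingLND

variable {G : Type*} [AddCommGroup G] {B : Type*} [CommRing B] [IsDomain B] [CharZero B]
  {𝒜 : G → AddSubgroup B} [DecidableEq G] [GradedRing 𝒜] {H : AddSubgroup G}

theorem IsLND.of_extends_verSub (hH : Tmem 𝒜 H) {D : Derivation ℤ (verSub 𝒜 H) (verSub 𝒜 H)}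
    (hD : IsLND D) {D' : Derivation ℤ B B} (hext : ∀ r : verSub 𝒜 H, D' r = D r) : IsLND D' := by
  have : CharZero (verSub 𝒜 H) := (Subring.subtype _).charZero
  refine isLND_of_forall_homogeneous 𝒜 fun i x hx => ?_
  obtain ⟨n, hxn⟩ := exists_pow_succ_mem_verSub hH hx
  refine exists_iterate_eq_zero_of_pow_eq_algebraMap hD hext ?_ n.succ_ne_zero (r := ⟨_, hxn⟩) rfl
  rintro r b hr ⟨s, hs⟩
  exact ⟨⟨b, mem_verSub_of_mul_mem r.2 (by simpa using hr) (hs ▸ s.2)⟩, rfl⟩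

end ExtendingLND

section HomogeneousComponents

open DirectSum

variable {G : Type*} [AddCommGroup G] {B : Type*} [CommRing B] (𝒜 : G → AddSubgroup B)

/-- The derivation `D` is homogeneous of degree `δ`; `IsHomogDer 𝒜 D` leaves `δ` unspecified. -/
def IsHomogDerOfDegree (D : Derivation ℤ B B) (δ : G) : Prop :=
  ∀ i x, x ∈ 𝒜 i → D x ∈ 𝒜 (i + δ)

variable [DecidableEq G] [GradedRing 𝒜]

theorem exists_decompose_ne_zero {x : B} (hx : x ≠ 0) : ∃ i, decompose 𝒜 x i ≠ 0 :=
  DFinsupp.ne_iff.1 ((decomposeAddEquiv 𝒜).map_ne_zero_iff.2 hx)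

open Classical in
theorem coe_decompose_mul_of_uniqueAdd {x y : B} {i j : G}
    (h : UniqueAdd (decompose 𝒜 x).support (decompose 𝒜 y).support i j) :
    (decompose 𝒜 (x * y) (i + j) : B) = decompose 𝒜 x i * decompose 𝒜 y j := by
  rw [decompose_mul, coe_mul_apply, Finset.sum_eq_single (i, j)]
  · rintro ⟨i', j'⟩ hij' hne
    rw [Finset.mem_filter, Finset.mem_product] at hij'
    have := h hij'.1.1 hij'.1.2 hij'.2
    exact absurd (Prod.ext this.1 this.2) hne
  · simp only [Finset.mem_filter, Finset.mem_product, DFinsupp.mem_support_iff, and_true]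
    intro h0
    obtain hi | hj := not_and_or.1 h0
    · rw [not_not.1 hi, ZeroMemClass.coe_zero, zero_mul]
    · rw [not_not.1 hj, ZeroMemClass.coe_zero, mul_zero]

theorem exists_mem_of_mul_mem [TwoUniqueSums G] [IsDomain B] {x y : B} (hxy : x * y ≠ 0) {n : G}
    (hn : x * y ∈ 𝒜 n) : ∃ i, x ∈ 𝒜 i := by
  classical
  let X := (decompose 𝒜 x).support
  let Y := (decompose 𝒜 y).support
  have hX : X.Nonempty := (exists_decompose_ne_zero 𝒜 (left_ne_zero_of_mul hxy)).imp fun _ =>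
    DFinsupp.mem_support_iff.2
  have hY : Y.Nonempty := (exists_decompose_ne_zero 𝒜 (right_ne_zero_of_mul hxy)).imp fun _ =>
    DFinsupp.mem_support_iff.2
  obtain hX1 | hX1 : X.card = 1 ∨ 1 < X.card := by have := hX.card_pos; omega
  · obtain ⟨i, hi⟩ := Finset.card_eq_one.1 hX1
    refine ⟨i, ?_⟩
    rw [← sum_support_decompose 𝒜 x, show (decompose 𝒜 x).support = {i} from hi,
      Finset.sum_singleton]
    exact Subtype.mem _
  obtain ⟨p, hp, q, hq, hpq, hpu, hqu⟩ := TwoUniqueSums.uniqueAdd_of_one_lt_card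
    (hX1.trans_le (Nat.le_mul_of_pos_right _ hY.card_pos))
  have hdeg : ∀ p ∈ X ×ˢ Y, UniqueAdd X Y p.1 p.2 → p.1 + p.2 = n := fun p hp hpu => by
    by_contra hne
    have h0 := coe_decompose_mul_of_uniqueAdd 𝒜 hpu
    rw [decompose_of_mem_ne 𝒜 hn (Ne.symm hne), eq_comm, mul_eq_zero] at h0
    simp only [X, Y, Finset.mem_product, DFinsupp.mem_support_iff] at hp
    exact h0.elim (fun h => hp.1 (Subtype.ext h)) fun h => hp.2 (Subtype.ext h)
  have hp' := Finset.mem_product.1 hp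
  have := hqu hp'.1 hp'.2 ((hdeg p hp hpu).trans (hdeg q hq hqu).symm)
  exact absurd (Prod.ext this.1 this.2) hpq

theorem exists_mem_of_isUnit [TwoUniqueSums G] [IsDomain B] {x : B} (hx : IsUnit x) :
    ∃ i, x ∈ 𝒜 i := by
  obtain ⟨y, hxy⟩ := hx.exists_right_inv
  exact exists_mem_of_mul_mem 𝒜 (hxy ▸ one_ne_zero) (hxy ▸ SetLike.GradedOne.one_mem)

/-- The homogeneous component of degree `T` of the derivation `D`. -/
def homogComponent (D : Derivation ℤ B B) (T : G) : Derivation ℤ B B :=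
  let φ : B →+ B := liftGraded 𝒜 fun i =>
    ((GradedRing.proj 𝒜 (i + T)).comp (D : B →+ B)).comp (𝒜 i).subtype
  have hφ {i : G} {x : B} (hx : x ∈ 𝒜 i) : φ x = decompose 𝒜 (D x) (i + T) :=
    liftGraded_of_mem 𝒜 _ hx
  Derivation.mk' φ.toIntLinearMap fun x y => by
    simp only [AddMonoidHom.coe_toIntLinearMap, smul_eq_mul]
    induction x using Decomposition.inductionOn 𝒜 with
    | zero => simp
    | add x x' hx hx' => rw [add_mul, map_add, map_add, hx, hx']; ring
    | @homogeneous i x =>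
      induction y using Decomposition.inductionOn 𝒜 with
      | zero => simp
      | add y y' hy hy' => rw [mul_add, map_add, map_add, hy, hy']; ring
      | @homogeneous j y =>
        rw [hφ (SetLike.mul_mem_graded x.2 y.2), hφ x.2, hφ y.2, Derivation.leibniz, smul_eq_mul,
          smul_eq_mul, decompose_add, DirectSum.add_apply, AddSubgroup.coe_add, add_assoc i j T,
          coe_decompose_mul_add_of_left_mem 𝒜 x.2, add_left_comm i j T,
          coe_decompose_mul_add_of_left_mem 𝒜 y.2]

theorem homogComponent_of_mem (D : Derivation ℤ B B) (T : G) {i : G} {x : B} (hx : x ∈ 𝒜 i) :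
    homogComponent 𝒜 D T x = decompose 𝒜 (D x) (i + T) :=
  liftGraded_of_mem 𝒜 _ hx

theorem isHomogDerOfDegree_homogComponent (D : Derivation ℤ B B) (T : G) :
    IsHomogDerOfDegree 𝒜 (homogComponent 𝒜 D T) T := fun i x hx => by
  rw [homogComponent_of_mem 𝒜 D T hx]
  exact Subtype.mem _

open Classical in
theorem coe_decompose_derivation (D : Derivation ℤ B B) (y : B) (j : G) :
    (decompose 𝒜 (D y) j : B) =
      ∑ l ∈ (decompose 𝒜 y).support, homogComponent 𝒜 D (j - l) (decompose 𝒜 y l : B) := by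
  conv_lhs => rw [← sum_support_decompose 𝒜 y]
  rw [map_sum, decompose_sum, DFinsupp.finsetSum_apply, AddSubgroup.val_finsetSum]
  refine Finset.sum_congr rfl fun l _ => ?_
  rw [homogComponent_of_mem 𝒜 D (j - l) (Subtype.mem _), add_sub_cancel]

theorem exists_homogComponent_ne_zero {D : Derivation ℤ B B} (hD : D ≠ 0) :
    ∃ T, homogComponent 𝒜 D T ≠ 0 := by
  obtain ⟨i, x, hx, hDx⟩ := exists_homogeneous_apply_ne_zero 𝒜 hD
  obtain ⟨j, hj⟩ := exists_decompose_ne_zero 𝒜 hDx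
  refine ⟨j - i, fun h0 => hj (Subtype.ext ?_)⟩
  rw [← add_sub_cancel i j, ← homogComponent_of_mem 𝒜 D (j - i) hx, h0]
  rfl

theorem finite_setOf_homogComponent_apply_ne_zero (D : Derivation ℤ B B) (y : B) :
    {T | homogComponent 𝒜 D T y ≠ 0}.Finite := by
  classical
  induction y using Decomposition.inductionOn 𝒜 with
  | zero => simp
  | @homogeneous i y =>
    refine ((decompose 𝒜 (D y)).support.finite_toSet.preimage
      (add_right_injective i).injOn).subset fun T hT => DFinsupp.mem_support_iff.2 fun h0 => hT ?_
    rw [homogComponent_of_mem 𝒜 D T y.2, h0, ZeroMemClass.coe_zero]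
  | add x y hx hy =>
    refine (hx.union hy).subset fun T hT => ?_
    by_contra! h
    exact hT (by simp_all)

variable (k : Type*) [Field k] [Algebra k B] [IsDomain B] [CharZero B] [TwoUniqueSums G]

theorem IsLND.homogComponent_algebraMap {D : Derivation ℤ B B} (hD : IsLND D) (T : G) (c : k) :
    homogComponent 𝒜 D T (algebraMap k B c) = 0 := by
  obtain rfl | hc := eq_or_ne c 0
  · simp
  have hu : IsUnit (algebraMap k B c) := hc.isUnit.map _
  obtain ⟨i, hi⟩ := exists_mem_of_isUnit 𝒜 hu
  rw [homogComponent_of_mem 𝒜 D T hi, hD.apply_unit hu, decompose_zero]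
  rfl

theorem IsLND.finite_setOf_homogComponent_ne_zero [Algebra.FiniteType k B] {D : Derivation ℤ B B}
    (hD : IsLND D) : {T | homogComponent 𝒜 D T ≠ 0}.Finite := by
  obtain ⟨S, hS⟩ := ‹Algebra.FiniteType k B›.out
  refine (S.finite_toSet.biUnion fun s _ =>
    finite_setOf_homogComponent_apply_ne_zero 𝒜 D s).subset fun T hT => ?_
  by_contra hTS
  simp only [Set.mem_iUnion, not_exists, Set.mem_ofPred_eq, not_not] at hTS
  refine hT (Derivation.ext fun x => ?_)
  have hx : x ∈ Algebra.adjoin k (S : Set B) := hS ▸ Algebra.mem_top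
  induction hx using Algebra.adjoin_induction with
  | mem x hx => exact hTS x hx
  | algebraMap c => exact hD.homogComponent_algebraMap 𝒜 k T c
  | add x y _ _ hx hy => simpa [hx] using hy
  | mul x y _ _ hx hy => simp_all [Derivation.leibniz]

end HomogeneousComponents

section LeadingComponent

open DirectSum

variable {G : Type*} [AddCommGroup G] [LinearOrder G] [IsOrderedAddMonoid G] {B : Type*}
  [CommRing B] {𝒜 : G → AddSubgroup B} [GradedRing 𝒜] {D : Derivation ℤ B B} {T : G}

theorem coe_decompose_derivation_add_of_forall_lt (hT : ∀ j > T, homogComponent 𝒜 D j = 0) {y : B}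
    {m : G} (hy : ∀ j > m, (decompose 𝒜 y j : B) = 0) :
    (decompose 𝒜 (D y) (m + T) : B) = homogComponent 𝒜 D T (decompose 𝒜 y m) := by
  classical
  rw [coe_decompose_derivation, Finset.sum_eq_single m]
  · rw [add_sub_cancel_left]
  · intro l _ hlm
    obtain hlm | hml := hlm.lt_or_gt
    · rw [hT _ (by rw [gt_iff_lt, lt_sub_iff_add_lt, add_comm]; gcongr), Derivation.zero_apply]
    · rw [hy l hml, map_zero]
  · intro hm
    rw [DFinsupp.notMem_support_iff.1 hm, ZeroMemClass.coe_zero, map_zero]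

theorem coe_decompose_derivation_eq_zero_of_lt (hT : ∀ j > T, homogComponent 𝒜 D j = 0) {y : B}
    {m : G} (hy : ∀ j > m, (decompose 𝒜 y j : B) = 0) {j : G} (hj : m + T < j) :
    (decompose 𝒜 (D y) j : B) = 0 := by
  classical
  rw [coe_decompose_derivation]
  refine Finset.sum_eq_zero fun l _ => ?_
  obtain hml | hlm := lt_or_ge m l
  · rw [hy l hml, map_zero]
  · rw [hT _ (by rw [gt_iff_lt, lt_sub_iff_add_lt, add_comm]; exact hj.trans_le' (by gcongr)),
      Derivation.zero_apply]

theorem iterate_homogComponent_of_forall_lt (hT : ∀ j > T, homogComponent 𝒜 D j = 0) {i : G}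
    {x : B} (hx : x ∈ 𝒜 i) (n : ℕ) :
    (⇑(homogComponent 𝒜 D T))^[n] x = decompose 𝒜 ((⇑D)^[n] x) (i + n • T) ∧
      ∀ j > i + n • T, (decompose 𝒜 ((⇑D)^[n] x) j : B) = 0 := by
  induction n with
  | zero =>
    rw [zero_nsmul, add_zero, Function.iterate_zero, Function.iterate_zero, id]
    exact ⟨(decompose_of_mem_same 𝒜 hx).symm, fun j hj => decompose_of_mem_ne 𝒜 hx hj.ne⟩
  | succ n ih =>
    rw [Function.iterate_succ_apply', Function.iterate_succ_apply', ih.1, succ_nsmul, ← add_assoc]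
    exact ⟨(coe_decompose_derivation_add_of_forall_lt hT ih.2).symm,
      fun _ => coe_decompose_derivation_eq_zero_of_lt hT ih.2⟩

theorem IsLND.homogComponent_of_forall_lt (hD : IsLND D) (hT : ∀ j > T, homogComponent 𝒜 D j = 0) :
    IsLND (homogComponent 𝒜 D T) :=
  isLND_of_forall_homogeneous 𝒜 fun i x hx => by
    obtain ⟨n, _, hn⟩ := hD x
    refine ⟨n, ?_⟩
    rw [(iterate_homogComponent_of_forall_lt hT hx n).1, hn, decompose_zero]
    rfl

variable (𝒜) in
theorem IsLND.exists_isHomogDerOfDegree (k : Type*) [Field k] [Algebra k B] [Algebra.FiniteType k B]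
    [IsDomain B] [CharZero B] (hD : IsLND D) (hD0 : D ≠ 0) :
    ∃ E δ, IsLND E ∧ E ≠ 0 ∧ IsHomogDerOfDegree 𝒜 E δ := by
  obtain ⟨T, hT0, hT⟩ := Set.exists_max_image _ id
    (hD.finite_setOf_homogComponent_ne_zero 𝒜 k) (exists_homogComponent_ne_zero 𝒜 hD0)
  refine ⟨homogComponent 𝒜 D T, T, hD.homogComponent_of_forall_lt fun j hj => ?_, hT0,
    isHomogDerOfDegree_homogComponent 𝒜 D T⟩
  by_contra hj0
  exact (hT j hj0).not_gt hj

end LeadingComponent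

section Restricting

variable {G : Type*} [AddCommGroup G] {B : Type*} [CommRing B] {𝒜 : G → AddSubgroup B}
  {E : Derivation ℤ B B} {δ : G}

theorem IsHomogDerOfDegree.iterate_mem (hE : IsHomogDerOfDegree 𝒜 E δ) {i : G} {x : B}
    (hx : x ∈ 𝒜 i) (n : ℕ) : (⇑E)^[n] x ∈ 𝒜 (i + n • δ) := by
  induction n with
  | zero => simpa using hx
  | succ n ih =>
    rw [Function.iterate_succ_apply', succ_nsmul, ← add_assoc]
    exact hE _ _ ih

theorem IsHomogDerOfDegree.smul [SetLike.GradedMonoid 𝒜] (hE : IsHomogDerOfDegree 𝒜 E δ) {r : G}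
    {f : B} (hf : f ∈ 𝒜 r) : IsHomogDerOfDegree 𝒜 (f • E) (r + δ) := fun i x hx => by
  rw [add_left_comm]
  exact SetLike.mul_mem_graded hf (hE i x hx)

/-- The nonzero elements of the kernel of `E`, for `B` a domain. -/
def kerNonzero (E : Derivation ℤ B B) : Submonoid B :=
  (kerDer E).toSubmonoid ⊓ nonZeroDivisors B

theorem mem_kerNonzero_iff [IsDomain B] {x : B} : x ∈ kerNonzero E ↔ E x = 0 ∧ x ≠ 0 :=
  and_congr_right fun _ => mem_nonZeroDivisors_iff_ne_zero

theorem iterate_derivation_slice_sub {s b : B} {m : ℕ} (hs : E (E s) = 0)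
    (hb : E ((⇑E)^[m] b) = 0) :
    (⇑E)^[m] (m.factorial * E s ^ m * b - (⇑E)^[m] b * s ^ m) = 0 := by
  have hpow : E (E s ^ m) = 0 := pow_mem (S := kerDer E) hs m
  rw [iterate_map_sub, iterate_derivation_const_mul (by simp [Derivation.leibniz, hpow]),
    iterate_derivation_const_mul hb, iterate_derivation_pow_self hs]
  ring

theorem IsHomogDerOfDegree.slice_sub_mem [SetLike.GradedMonoid 𝒜] (hE : IsHomogDerOfDegree 𝒜 E δ)
    {σ i : G} {s b : B} (hs : s ∈ 𝒜 σ) (hb : b ∈ 𝒜 i) (m : ℕ) :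
    m.factorial * E s ^ m * b - (⇑E)^[m] b * s ^ m ∈ 𝒜 (m • (σ + δ) + i) := by
  refine sub_mem ?_ ?_
  · rw [← zero_add (m • (σ + δ))]
    exact SetLike.mul_mem_graded (SetLike.mul_mem_graded (SetLike.natCast_mem_graded 𝒜 _)
      (SetLike.pow_mem_graded m (hE σ s hs))) hb
  · rw [show m • (σ + δ) + i = i + m • δ + m • σ by rw [nsmul_add]; abel]
    exact SetLike.mul_mem_graded (hE.iterate_mem hb m) (SetLike.pow_mem_graded m hs)

/-- Modulo a local slice `s`, every `b` is a kernel element up to a power of `E s`: subtracting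
`E ^ m b / (m! (E s) ^ m) * s ^ m` lowers the degree `m` of `b`. -/
theorem IsHomogDerOfDegree.exists_dvd_sub [SetLike.GradedMonoid 𝒜] (hE : IsHomogDerOfDegree 𝒜 E δ)
    {σ i : G} {s b : B} (hs : s ∈ 𝒜 σ) (hss : E (E s) = 0) (hb : b ∈ 𝒜 i) {m : ℕ}
    (hm : (⇑E)^[m] b = 0) :
    ∃ q N : ℕ, ∃ α ∈ 𝒜 (N • (σ + δ) + i), q ≠ 0 ∧ E α = 0 ∧ s ∣ q * E s ^ N * b - α := by
  induction m generalizing i b with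
  | zero =>
    obtain rfl : b = 0 := hm
    exact ⟨1, 0, 0, zero_mem _, one_ne_zero, map_zero E, by simp⟩
  | succ m ih =>
    obtain rfl | hm0 := eq_or_ne m 0
    · exact ⟨1, 0, b, by simpa using hb, one_ne_zero, hm, by simp⟩
    rw [Function.iterate_succ_apply'] at hm
    obtain ⟨q, N, α, hα, hq, hEα, hdvd⟩ :=
      ih (hE.slice_sub_mem hs hb m) (iterate_derivation_slice_sub hss hm)
    refine ⟨q * m.factorial, N + m, α, ?_, mul_ne_zero hq m.factorial_ne_zero, hEα, ?_⟩
    · rwa [add_nsmul, add_assoc]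
    · have hsm : s ∣ q * E s ^ N * ((⇑E)^[m] b * s ^ m) :=
        ((dvd_pow_self s hm0).mul_left _).mul_left _
      convert hdvd.add hsm using 1
      push_cast
      ring

variable [IsDomain B]

theorem Mbar_le_degreeGroup_kerNonzero [SetLike.GradedMonoid 𝒜] [Algebra ℚ B] (hL : IsLND E)
    (hE : IsHomogDerOfDegree 𝒜 E δ) {σ : G} {s : B} (hs : s ∈ 𝒜 σ) (hss : E (E s) = 0)
    {p : Ideal B} (hp : p.IsPrime) (hsp : s ∈ p) (hEsp : E s ∉ p) :
    Mbar 𝒜 p ≤ degreeGroup 𝒜 (kerNonzero E) := by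
  refine (AddSubgroup.closure_le _).2 fun i hi => ?_
  obtain ⟨b, hb, hbp⟩ := Set.not_subset.1 hi
  obtain ⟨m, _, hm⟩ := hL b
  obtain ⟨q, N, α, hα, hq, hEα, hdvd⟩ := hE.exists_dvd_sub hs hss hb hm
  have hqp : (q : B) ∉ p := fun hqp => hp.ne_top <| Ideal.eq_top_of_isUnit_mem _ hqp <| by
    simpa using (Nat.cast_ne_zero (R := ℚ).2 hq).isUnit.map (algebraMap ℚ B)
  have hα0 : α ≠ 0 := by
    rintro rfl
    rw [sub_zero] at hdvd
    exact p.primeCompl.mul_mem (p.primeCompl.mul_mem hqp (p.primeCompl.pow_mem hEsp N)) hbp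
      (p.mem_of_dvd hdvd hsp)
  have hEs0 : E s ≠ 0 := fun h0 => hEsp (h0 ▸ p.zero_mem)
  have hdeg : N • (σ + δ) + i ∈ degreeGroup 𝒜 (kerNonzero E) :=
    AddSubgroup.subset_closure ⟨α, hα, mem_kerNonzero_iff.2 ⟨hEα, hα0⟩⟩
  have hdeg_slice : σ + δ ∈ degreeGroup 𝒜 (kerNonzero E) :=
    AddSubgroup.subset_closure ⟨E s, hE σ s hs, mem_kerNonzero_iff.2 ⟨hss, hEs0⟩⟩
  exact (AddSubgroup.add_mem_cancel_left _ (nsmul_mem hdeg_slice N)).1 hdeg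

theorem IsLND.exists_heightOne_mem_notMem [CharZero B] [IsNoetherianRing B] (hL : IsLND E) {s : B}
    (hs : E s ≠ 0) (hss : E (E s) = 0) : ∃ p, heightOne p ∧ s ∈ p ∧ E s ∉ p := by
  have hs0 : s ≠ 0 := by
    rintro rfl
    exact hs (map_zero E)
  have hrad : E s ∉ (Ideal.span {s}).radical := by
    rintro ⟨N, hN⟩
    obtain ⟨c, hc⟩ := Ideal.mem_span_singleton.1 hN
    exact hs (hL.apply_eq_zero_of_mul (hc ▸ pow_ne_zero N hs)
      (hc ▸ pow_mem (S := kerDer E) hss N))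
  rw [← Ideal.sInf_minimalPrimes, Submodule.mem_sInf] at hrad
  push Not at hrad
  obtain ⟨p, hp, hEsp⟩ := hrad
  exact ⟨p, heightOne_of_mem_minimalPrimes_span_singleton hs0 hp,
    hp.1.2 (Ideal.mem_span_singleton_self s), hEsp⟩

variable [DecidableEq G] [GradedRing 𝒜]

/-- With `s` a homogeneous local slice and `p ∌ E s` minimal over `s`, saturation at `p` puts
`deg s` in the group, and `deg (E s) = deg s + δ` lies there too. -/
theorem IsLND.degree_mem_degreeGroup_kerNonzero [Algebra ℚ B] [IsNoetherianRing B]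
    (hsat : Gbar 𝒜 = Gsub 𝒜) (hL : IsLND E) (hE0 : E ≠ 0) (hE : IsHomogDerOfDegree 𝒜 E δ) :
    δ ∈ degreeGroup 𝒜 (kerNonzero E) := by
  have : CharZero B := algebraRat.charZero B
  obtain ⟨i, x, hx, hEx⟩ := exists_homogeneous_apply_ne_zero 𝒜 hE0
  obtain ⟨m, hEs, hss⟩ := hL.exists_local_slice hEx
  set s := (⇑E)^[m] x
  have hs : s ∈ 𝒜 (i + m • δ) := hE.iterate_mem hx m
  have hs0 : s ≠ 0 := fun h0 => hEs (by rw [h0, map_zero])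
  obtain ⟨p, hp, hsp, hEsp⟩ := hL.exists_heightOne_mem_notMem hEs hss
  have hdeg : i + m • δ ∈ degreeGroup 𝒜 (kerNonzero E) :=
    Mbar_le_degreeGroup_kerNonzero hL hE hs hss hp.1 hsp hEsp
      ((Gbar_eq_Gsub_iff 𝒜).1 hsat p hp (mem_Gsub_of_mem hs hs0))
  refine (AddSubgroup.add_mem_cancel_left _ hdeg).1 ?_
  exact AddSubgroup.subset_closure ⟨E s, hE _ s hs, mem_kerNonzero_iff.2 ⟨hss, hEs⟩⟩

variable {H : AddSubgroup G}

theorem IsLND.not_isRigid_verSub_of_degree_mem [CharZero B] (hH : Tmem 𝒜 H) (hL : IsLND E)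
    (hE0 : E ≠ 0) (hE : IsHomogDerOfDegree 𝒜 E δ) (hδ : δ ∈ H) : ¬ IsRigid (verSub 𝒜 H) := by
  intro hrigid
  have hstable (x : verSub 𝒜 H) : E x ∈ (algebraMap (verSub 𝒜 H) B).range := by
    refine ⟨⟨E x, derivation_mem_closure E (fun y hy => ?_) x.2⟩, rfl⟩
    obtain ⟨i, hi, hy⟩ := Set.mem_iUnion₂.1 hy
    exact mem_verSub_of_mem (H.add_mem hi hδ) (hE i y hy)
  obtain ⟨D, hD⟩ := exists_derivation_of_forall_mem_algebraMap_range E hstable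
  have hD0 : D = 0 := hrigid D (hL.of_algebraMap hD)
  obtain ⟨i, x, hx, hEx⟩ := exists_homogeneous_apply_ne_zero 𝒜 hE0
  have hx0 : x ≠ 0 := by
    rintro rfl
    exact hEx (map_zero E)
  obtain ⟨n, hxn⟩ := exists_pow_succ_mem_verSub hH hx
  have hExn : E (x ^ (n + 1)) = 0 := by
    rw [show E (x ^ (n + 1)) = _ from hD ⟨_, hxn⟩, hD0, Derivation.zero_apply, map_zero]
  rw [pow_succ'] at hExn
  exact hEx (hL.apply_eq_zero_of_mul (mul_ne_zero hx0 (pow_ne_zero n hx0)) hExn)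

theorem IsLND.not_isRigid_verSub [Algebra ℚ B] [IsNoetherianRing B] (hsat : Gbar 𝒜 = Gsub 𝒜)
    (hH : Tmem 𝒜 H) (hL : IsLND E) (hE0 : E ≠ 0) (hE : IsHomogDerOfDegree 𝒜 E δ) :
    ¬ IsRigid (verSub 𝒜 H) := by
  have : CharZero B := algebraRat.charZero B
  obtain ⟨r, f, hf, hfE, hδr⟩ := exists_mem_add_mem_of_mem_degreeGroup hH
    (fun h => (mem_kerNonzero_iff.1 h).2 rfl) (hL.degree_mem_degreeGroup_kerNonzero hsat hE0 hE)
  obtain ⟨hEf, hf0⟩ := mem_kerNonzero_iff.1 hfE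
  have hfE0 : f • E ≠ 0 := fun h0 => hE0 <| Derivation.ext fun x =>
    (mul_eq_zero.1 (DFunLike.congr_fun h0 x)).resolve_left hf0
  exact (hL.smul hEf).not_isRigid_verSub_of_degree_mem hH hfE0 (hE.smul hf) (add_comm δ r ▸ hδr)

end Restricting

section ZGraded

variable {B : Type*} [CommRing B]

theorem groupGen_injective : Function.Injective groupGen := fun H K h => by
  have hspan := Ideal.span_singleton_eq_span_singleton.2 (Int.associated_iff_natAbs.2 h)
  rw [Ideal.span_singleton_generator, Ideal.span_singleton_generator] at hspan
  exact AddSubgroup.toIntSubmodule.injective hspan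

theorem heightOne.mem_homogHt1 [IsDomain B] {𝒜 : ℤ → AddSubgroup B} [GradedRing 𝒜] {p : Ideal B}
    (hp : heightOne p) {i : ℤ} {x : B} (hx : x ∈ 𝒜 i) (hx0 : x ≠ 0) (hxp : x ∈ p) :
    p ∈ homogHt1 𝒜 := by
  have hcore : (p.homogeneousCore 𝒜).toIdeal = p :=
    hp.eq_of_le hp.1.homogeneousCore
      (fun h0 => hx0 <| (Submodule.mem_bot B).1 <|
        h0 ▸ Ideal.mem_homogeneousCore_of_homogeneous_of_mem ⟨i, hx⟩ hxp)
      (Ideal.toIdeal_homogeneousCore_le 𝒜 p)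
  refine ⟨hp, le_antisymm ?_ (Ideal.span_le.2 fun y hy => hy.1)⟩
  conv_lhs => rw [← hcore]
  refine Ideal.span_mono ?_
  rintro _ ⟨y, hy, rfl⟩
  exact ⟨hy, y.2⟩

theorem Gsub_le_Mbar_of_mem_homogHt1 {𝒜 : ℤ → AddSubgroup B} (hsat : ebarB 𝒜 = eB 𝒜)
    {p : Ideal B} (hp : p ∈ homogHt1 𝒜) : Gsub 𝒜 ≤ Mbar 𝒜 p := by
  rw [ebarB, if_pos ⟨p, hp⟩, eB] at hsat
  rw [← groupGen_injective hsat]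
  exact iInf_le (fun p : homogHt1 𝒜 => Mbar 𝒜 p.1) ⟨p, hp⟩

theorem Gbar_eq_Gsub_of_ebarB_eq_eB [IsDomain B] {𝒜 : ℤ → AddSubgroup B} [GradedRing 𝒜]
    (hsat : ebarB 𝒜 = eB 𝒜) : Gbar 𝒜 = Gsub 𝒜 := by
  refine (Gbar_eq_Gsub_iff 𝒜).2 fun p hp => ?_
  by_cases hhom : ∃ i, ∃ x ∈ 𝒜 i, x ≠ 0 ∧ x ∈ p
  · obtain ⟨i, x, hx, hx0, hxp⟩ := hhom
    exact Gsub_le_Mbar_of_mem_homogHt1 hsat (hp.mem_homogHt1 hx hx0 hxp)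
  · push Not at hhom
    refine AddSubgroup.closure_mono fun i hi => ?_
    obtain ⟨x, hx, hx0⟩ := (𝒜 i).bot_or_exists_ne_zero.resolve_left hi
    exact fun hsub => hhom i x hx hx0 (hsub hx)

theorem tmem_zmultiples (𝒜 : ℤ → AddSubgroup B) {d : ℕ} (hd : 1 ≤ d) :
    Tmem 𝒜 (AddSubgroup.zmultiples (d : ℤ)) := fun g _ =>
  ⟨d, hd, Int.mem_zmultiples_iff.2 ⟨g, nsmul_eq_mul d g⟩⟩

theorem mem_NRset_iff {𝒜 : ℤ → AddSubgroup B} {d : ℕ} :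
    d ∈ NRset 𝒜 ↔ 1 ≤ d ∧ ¬ IsRigid (verSub 𝒜 (AddSubgroup.zmultiples (d : ℤ))) := by
  rw [IsRigid]
  push Not
  exact Iff.rfl

theorem NRset_eq_empty {𝒜 : ℤ → AddSubgroup B}
    (h : ∀ H, Tmem 𝒜 H → IsRigid (verSub 𝒜 H)) : NRset 𝒜 = ∅ :=
  Set.eq_empty_of_forall_notMem fun _ hd =>
    have ⟨hd1, hnonrigid⟩ := mem_NRset_iff.1 hd
    hnonrigid (h _ (tmem_zmultiples 𝒜 hd1))

theorem NRset_eq_setOf_one_le {𝒜 : ℤ → AddSubgroup B}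
    (h : ∀ H, Tmem 𝒜 H → ¬ IsRigid (verSub 𝒜 H)) : NRset 𝒜 = {d | 1 ≤ d} :=
  Set.ext fun _ => mem_NRset_iff.trans <|
    and_iff_left_of_imp fun hd => h _ (tmem_zmultiples 𝒜 hd)

end ZGraded

theorem NR_empty_or_all_general (k : Type*) [Field k] [CharZero k]
    {G : Type*} [AddCommGroup G] [LinearOrder G] [IsOrderedAddMonoid G]
    {B : Type*} [CommRing B] [IsDomain B] [IsIntegrallyClosed B]
    [Algebra k B] [Algebra.FiniteType k B]
    (𝒜 : G → AddSubgroup B) [GradedRing 𝒜] (hsat : Gbar 𝒜 = Gsub 𝒜) :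
    (∀ H, Tmem 𝒜 H → IsRigid (verSub 𝒜 H)) ∨ ∀ H, Tmem 𝒜 H → ¬ IsRigid (verSub 𝒜 H) := by
  refine or_iff_not_imp_left.2 fun hnonrigid H' hH' => ?_
  simp only [IsRigid, not_forall] at hnonrigid
  obtain ⟨H, hH, D, hD, hD0⟩ := hnonrigid
  let : Algebra ℚ B := ((algebraMap k B).comp (algebraMap ℚ k)).toAlgebra
  have : CharZero B := algebraRat.charZero B
  have : IsNoetherianRing B := Algebra.FiniteType.isNoetherianRing k B
  obtain ⟨D', hext⟩ := exists_derivation_extending_verSub hsat hH D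
  have hD' : IsLND D' := .of_extends_verSub hH hD hext
  have hD'0 : D' ≠ 0 := by
    rintro rfl
    exact hD0 (Derivation.ext fun r => Subtype.ext (hext r).symm)
  obtain ⟨E, δ, hE, hE0, hδ⟩ := hD'.exists_isHomogDerOfDegree 𝒜 k hD'0
  exact hE.not_isRigid_verSub hsat hH' hE0 hδ

/-- Let k be a field of characteristic 0 and B a ℤ-graded normal affine k-domain.
If B is saturated in codimension 1 (i.e. ē(B) = e(B)), then NR(B) = ∅ or
NR(B) = { d : d ≥ 1 }; i.e. either every Veronese subring B^{(d)} (d ≥ 1) is rigid,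
or every one is non-rigid. -/
theorem NR_empty_or_all
    {k : Type*} [Field k] [CharZero k]
    {B : Type*} [CommRing B] [IsDomain B] [IsIntegrallyClosed B]
    [Algebra k B] [Algebra.FiniteType k B]
    (𝒜 : ℤ → AddSubgroup B) [GradedRing 𝒜]
    (hsat : ebarB 𝒜 = eB 𝒜) :
    NRset 𝒜 = ∅ ∨ NRset 𝒜 = { d : ℕ | 1 ≤ d } := by
  exact (NR_empty_or_all_general k 𝒜 (Gbar_eq_Gsub_of_ebarB_eq_eB hsat)).imp
    NRset_eq_empty NRset_eq_setOf_one_le
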